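/- arXiv:2604.27592 — 3 statements merged into one kernel-verified Lean document; each statement's English description precedes it below -/
import Mathlib

section
/- Let F be an algebraically closed field of characteristic 0, k ≥ 2 an integer, and J ∈ M_n(F) a matrix in Jordan canonical form with at most one Jordan block corresponding to the eigenvalue 0 (i.e., nullity of J is at most 1). Then the map (X₁, X₂) ↦ X₁^k + J·X₂^k is surjective on M_n(F). -/
/-- The Jordan block of size `m` with eigenvalue `lam`. -/
def jordanBlock {F : Type*} [Zero F] [One F] (lam : F) (m : ℕ) :
    Matrix (Fin m) (Fin m) F :=
  Matrix.of fun i j => if i = j then lam else if (i : ℕ) + 1 = (j : ℕ) then 1 else 0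

open Polynomial in
/-- Invertible matrices over an algebraically closed field of characteristic zero have roots. -/
lemma exists_root_of_isUnit {F : Type*} [Field F] [DecidableEq F] [IsAlgClosed F] [CharZero F]
    {ι : Type*} [Fintype ι] [DecidableEq ι] (k : ℕ) (hk : 2 ≤ k)
    (A : Matrix ι ι F) (hA : IsUnit A) : ∃ X : Matrix ι ι F, A = X ^ k := by
  classical
  have hk0 : 0 < k := by omega
  set f := A.charpoly with hf
  have hf0 : f ≠ 0 := (A.charpoly_monic).ne_zero
  have hroot : ∀ z : F, ∃ y, y ^ k = z := fun z => IsAlgClosed.exists_pow_nat_eq z hk0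
  choose ρ hρ using hroot
  let p : F[X] := Lagrange.interpolate f.roots.toFinset id ρ
  have hp : ∀ z ∈ f.roots.toFinset, p.eval z = ρ z := by
    intro z hz
    exact Lagrange.eval_interpolate_at_node (v := id) ρ (Function.injective_id.injOn) hz
  have hdvd : f ∣ (p ^ k - X) ^ Multiset.card f.roots := by
    have h1 : f = (f.roots.map (fun a => X - C a)).prod := by
      have := (IsAlgClosed.splits f).eq_prod_roots
      rw [(A.charpoly_monic).leadingCoeff, C_1, one_mul] at this
      exact this
    have h2 : (f.roots.map (fun a => X - C a)).prod ∣
        (f.roots.map (fun _ => p ^ k - X)).prod := by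
      apply Multiset.prod_dvd_prod_of_dvd
      intro a ha
      rw [dvd_iff_isRoot]
      simp [IsRoot, hp a (Multiset.mem_toFinset.2 ha), hρ]
    rw [Multiset.map_const', Multiset.prod_replicate] at h2
    rw [← h1] at h2
    exact h2
  -- work in the commutative ring generated by `A`
  let S := Algebra.adjoin F ({A} : Set (Matrix ι ι F))
  let a : S := ⟨A, Algebra.self_mem_adjoin_singleton F A⟩
  let x : S := aeval a p
  letI : CommRing S := Algebra.adjoinCommRingOfComm F (by
    intro u hu v hv
    rw [Set.mem_singleton_iff.1 hu, Set.mem_singleton_iff.1 hv])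
  have haeval : ∀ q : F[X], ((aeval a q : S) : Matrix ι ι F) = aeval A q := by
    intro q
    exact (Polynomial.aeval_algHom_apply S.val a q).symm
  have hnil : IsNilpotent (x ^ k - a) := by
    refine ⟨Multiset.card f.roots, ?_⟩
    have : x ^ k - a = aeval a (p ^ k - X) := by simp [x]
    rw [this, ← map_pow]
    apply Subtype.ext
    rw [haeval]
    obtain ⟨g, hg⟩ := hdvd
    rw [hg, map_mul, hf, Matrix.aeval_self_charpoly, zero_mul]
    rfl
  have hunit_a : IsUnit a := by
    -- integral: coprimality of X with charpoly
    have hc : f.coeff 0 ≠ 0 := by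
      have := A.det_eq_sign_charpoly_coeff
      intro h
      rw [← hf, h, mul_zero] at this
      exact ((Matrix.isUnit_iff_isUnit_det A).1 hA).ne_zero this
    have h3 : aeval a f = 0 := by
      apply Subtype.ext
      rw [haeval, hf, Matrix.aeval_self_charpoly]; rfl
    rw [← divX_mul_X_add f, map_add, map_mul, aeval_X, aeval_C] at h3
    have h4 : IsUnit (aeval a f.divX * a) := by
      rw [eq_neg_of_add_eq_zero_left h3]
      exact ((IsUnit.mk0 _ hc).map (algebraMap F S)).neg
    exact isUnit_of_mul_isUnit_right h4
  have hunit_x : IsUnit x := by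
    have h5 : IsUnit (x ^ k) := by
      have := hnil.isUnit_add_left_of_commute hunit_a (Commute.all _ _)
      simpa using this
    exact (isUnit_pow_iff (by omega)).1 h5
  have := Polynomial.existsUnique_nilpotent_sub_and_aeval_eq_zero (R := S) (S := S)
    (P := X ^ k - C a) (x := x) (by simpa using hnil) (by
      simp only [derivative_sub, derivative_X_pow, derivative_C, sub_zero, map_mul, map_pow,
        aeval_X, aeval_C]
      refine IsUnit.mul ?_ (hunit_x.pow _)
      have : IsUnit ((k : F)) := IsUnit.mk0 _ (by exact_mod_cast hk0.ne')
      have := this.map (algebraMap F S)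
      simpa using this)
  obtain ⟨y, ⟨_, hy⟩, _⟩ := this
  refine ⟨(y : Matrix ι ι F), ?_⟩
  have h6 : a = y ^ k := by
    have : y ^ k - a = 0 := by simpa using hy
    exact (sub_eq_zero.1 this).symm
  have := congrArg (Subtype.val) h6
  simpa [a] using this

lemma isUnit_of_ker {F : Type*} [Field F] {ι : Type*} [Fintype ι] [DecidableEq ι]
    (M : Matrix ι ι F) (h : ∀ x, M.mulVec x = 0 → x = 0) : IsUnit M := by
  rw [← Matrix.mulVec_injective_iff_isUnit]
  intro x y hxy
  have := h (x - y) (by rw [Matrix.mulVec_sub]; exact sub_eq_zero.2 hxy)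
  exact sub_eq_zero.1 this

/-- A nonzero scalar avoiding the spectrum. -/
lemma exists_scalar {F : Type*} [Field F] [CharZero F] {ι : Type*} [Fintype ι] [DecidableEq ι]
    (M : Matrix ι ι F) : ∃ c : F, c ≠ 0 ∧ ∀ x, M.mulVec x = c • x → x = 0 := by
  classical
  obtain ⟨c, hc⟩ := Infinite.exists_notMem_finset
    ((M.charpoly * Polynomial.X).roots.toFinset )
  have hne : M.charpoly * Polynomial.X ≠ 0 :=
    mul_ne_zero M.charpoly_monic.ne_zero Polynomial.X_ne_zero
  rw [Multiset.mem_toFinset, Polynomial.mem_roots hne, Polynomial.IsRoot, Polynomial.eval_mul,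
    Polynomial.eval_X, mul_eq_zero, not_or, Matrix.eval_charpoly] at hc
  refine ⟨c, hc.2, fun x hx => ?_⟩
  by_contra hx0
  apply hc.1
  apply Matrix.exists_mulVec_eq_zero_iff.1
  exact ⟨x, hx0, by simp [Matrix.sub_mulVec, hx, Matrix.scalar_apply,
    ← Matrix.smul_one_eq_diagonal, Matrix.smul_mulVec]⟩

lemma core_unit {F : Type*} [Field F] [DecidableEq F] [IsAlgClosed F] [CharZero F]
    {ι : Type*} [Fintype ι] [DecidableEq ι] (k : ℕ) (hk : 2 ≤ k)
    (J : Matrix ι ι F) (hJ : IsUnit J) (C : Matrix ι ι F) :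
    ∃ X₁ X₂ : Matrix ι ι F, C = X₁ ^ k + J * X₂ ^ k := by
  obtain ⟨c, hc, hcC⟩ := exists_scalar C
  obtain ⟨X₁, h1⟩ := exists_root_of_isUnit k hk (c • (1 : Matrix ι ι F)) (by
    apply isUnit_of_ker
    intro x hx
    simpa [Matrix.smul_mulVec, hc] using hx)
  have hu : IsUnit (C - c • 1) := by
    apply isUnit_of_ker
    intro x hx
    apply hcC
    simpa [Matrix.sub_mulVec, Matrix.smul_mulVec, sub_eq_zero] using hx
  obtain ⟨u, rfl⟩ := hJ
  obtain ⟨X₂, h2⟩ := exists_root_of_isUnit k hk ((↑u⁻¹ : Matrix ι ι F) * (C - c • 1)) (u⁻¹.isUnit.mul hu)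
  exact ⟨X₁, X₂, by rw [← h1, ← h2, ← mul_assoc, Units.mul_inv, one_mul, add_sub_cancel]⟩

lemma core_sing {F : Type*} [Field F] [DecidableEq F] [IsAlgClosed F] [CharZero F]
    {ι : Type*} [Fintype ι] [DecidableEq ι] (k : ℕ) (hk : 2 ≤ k) (i₀ : ι)
    (J Q : Matrix ι ι F) (hQ : IsUnit Q)
    (hJ : J = Matrix.diagonal (fun i => if i = i₀ then 0 else 1) * Q) (C : Matrix ι ι F) :
    ∃ X₁ X₂ : Matrix ι ι F, C = X₁ ^ k + J * X₂ ^ k := by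
  set D : Matrix ι ι F := Matrix.diagonal (fun i => if i = i₀ then 0 else 1) with hD
  obtain ⟨c, hc, hcC⟩ := exists_scalar (D * C)
  let e : ι → F := Pi.single i₀ 1
  have hDD : ∀ i x, (D.mulVec x) i = if i = i₀ then 0 else x i := by
    intro i x
    rw [hD, Matrix.mulVec_diagonal]; split_ifs <;> simp
  -- reduction to finding `u`
  have key : ∀ u : ι → F, u i₀ = 0 →
      (∃ X, c • D + Matrix.vecMulVec e (C i₀) + Matrix.vecMulVec u e = X ^ k) →
      ∃ X₁ X₂ : Matrix ι ι F, C = X₁ ^ k + J * X₂ ^ k := by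
    rintro u hu ⟨X₁, h1⟩
    let S := D * C - c • D - Matrix.vecMulVec u e + Matrix.vecMulVec e e
    have hS : IsUnit S := by
      apply isUnit_of_ker
      intro x hx
      have h0 : ∀ i, ((D * C).mulVec x) i - c * (if i = i₀ then 0 else x i) - u i * x i₀
          + e i * x i₀ = 0 := by
        intro i
        have := congrFun hx i
        simp only [S, Matrix.add_mulVec, Matrix.sub_mulVec, Matrix.smul_mulVec,
          Matrix.vecMulVec_mulVec, Pi.add_apply, Pi.sub_apply, Pi.smul_apply, hDD] at this
        simpa [e, mul_comm] using this
      have hi : ((D * C).mulVec x) i₀ = 0 := by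
        rw [← Matrix.mulVec_mulVec, hDD]; simp
      have hx0 : x i₀ = 0 := by
        have := h0 i₀
        simpa [hi, hu, e] using this
      apply hcC
      ext i
      by_cases h : i = i₀
      · subst h; simp [hi, hx0]
      · have := h0 i
        simp only [hx0, h, if_false, mul_zero, sub_zero, add_zero] at this
        simpa [sub_eq_zero] using this
    obtain ⟨q, rfl⟩ := hQ
    obtain ⟨X₂, h2⟩ := exists_root_of_isUnit k hk ((↑q⁻¹ : Matrix ι ι F) * S) (q⁻¹.isUnit.mul hS)
    refine ⟨X₁, X₂, ?_⟩
    rw [← h1, ← h2, hJ, mul_assoc, ← mul_assoc (q : Matrix ι ι F), Units.mul_inv, one_mul]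
    ext i j
    simp only [S, hD, Matrix.add_apply, Matrix.sub_apply, Matrix.smul_apply, Matrix.diagonal_mul,
      Matrix.vecMulVec_apply, e]
    by_cases h : i = i₀
    · subst h; simp [hu, Matrix.diagonal_apply]
    · simp [h]
  have hmul : ∀ (u x : ι → F) i, ((c • D + Matrix.vecMulVec e (C i₀) +
      Matrix.vecMulVec u e).mulVec x) i =
      c * (if i = i₀ then 0 else x i) + e i * (C i₀ ⬝ᵥ x) + u i * x i₀ := by
    intro u x i
    simp only [Matrix.add_mulVec, Matrix.smul_mulVec,
          Matrix.vecMulVec_mulVec, Pi.add_apply, Pi.smul_apply, hDD]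
    simp [e, mul_comm]
  by_cases hw : C i₀ i₀ = 0
  · by_cases hw' : ∃ j, C i₀ j ≠ 0
    · obtain ⟨j, hj⟩ := hw'
      have hji : j ≠ i₀ := fun h => hj (h ▸ hw)
      refine key (Pi.single j 1) (by simp [hji.symm]) ?_
      obtain ⟨X, hX⟩ := exists_root_of_isUnit k hk (c • D + Matrix.vecMulVec e (C i₀) +
        Matrix.vecMulVec (Pi.single j 1) e) (by
          apply isUnit_of_ker
          intro x hx
          have h0 := fun i => (hmul (Pi.single j 1) x i).symm.trans (congrFun hx i)
          have h1 : ∀ i, i ≠ i₀ → i ≠ j → x i = 0 := by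
            intro i h h'
            simpa [h, h', e, hc] using h0 i
          have h2 : C i₀ ⬝ᵥ x = 0 := by
            simpa [e, hji.symm] using h0 i₀
          have h3 : C i₀ ⬝ᵥ x = C i₀ j * x j := by
            rw [dotProduct]
            apply Finset.sum_eq_single j
            · intro b _ hb
              by_cases hbi : b = i₀
              · rw [hbi, hw, zero_mul]
              · rw [h1 b hbi hb, mul_zero]
            · simp
          have h4 : x j = 0 := by
            rw [h3] at h2
            exact (mul_eq_zero.1 h2).resolve_left hj
          have h5 : x i₀ = 0 := by
            simpa [hji, e, h4] using h0 j
          ext i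
          by_cases hi : i = i₀
          · rw [hi, h5]; rfl
          by_cases hij : i = j
          · rw [hij, h4]; rfl
          exact h1 i hi hij)
      exact ⟨X, hX⟩
    · push Not at hw'
      refine key 0 rfl ?_
      obtain ⟨d, hd⟩ := IsAlgClosed.exists_pow_nat_eq c (show 0 < k by omega)
      refine ⟨d • D, ?_⟩
      have : C i₀ = 0 := funext hw'
      rw [this, smul_pow, hd, hD, Matrix.diagonal_pow]
      simp only [Matrix.vecMulVec_zero, Matrix.zero_vecMulVec, add_zero]
      congr 2
      ext i
      simp only [Pi.pow_apply]
      split_ifs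
      · rw [zero_pow (by omega)]
      · rw [one_pow]
  · refine key 0 rfl ?_
    obtain ⟨X, hX⟩ := exists_root_of_isUnit k hk (c • D + Matrix.vecMulVec e (C i₀) +
        Matrix.vecMulVec 0 e) (by
          apply isUnit_of_ker
          intro x hx
          have h0 := fun i => (hmul 0 x i).symm.trans (congrFun hx i)
          have h1 : ∀ i, i ≠ i₀ → x i = 0 := by
            intro i h
            simpa [h, e, hc] using h0 i
          have h2 : C i₀ ⬝ᵥ x = 0 := by
            simpa [e] using h0 i₀
          have h3 : C i₀ ⬝ᵥ x = C i₀ i₀ * x i₀ := by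
            rw [dotProduct]
            apply Finset.sum_eq_single i₀
            · intro b _ hb
              rw [h1 b hb, mul_zero]
            · simp
          have h4 : x i₀ = 0 := by
            rw [h3] at h2
            exact (mul_eq_zero.1 h2).resolve_left hw
          ext i
          by_cases hi : i = i₀
          · rw [hi, h4]; rfl
          exact h1 i hi)
    exact ⟨X, hX⟩

lemma jordan_ker {F : Type*} [Field F] (m : ℕ) (l : F) (hl : l ≠ 0) (x : Fin m → F)
    (h : (jordanBlock l m).mulVec x = 0) : x = 0 := by
  have ht : (jordanBlock l m).BlockTriangular id := by
    intro i j hij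
    have hij' : (j : ℕ) < i := hij
    have h1 : i ≠ j := by rintro rfl; omega
    have h2 : ¬ ((i : ℕ) + 1 = j) := by omega
    simp [jordanBlock, h1, h2]
  have hdet : (jordanBlock l m).det ≠ 0 := by
    rw [Matrix.det_of_upperTriangular ht]
    simp [jordanBlock, Finset.prod_const, hl]
  exact Matrix.eq_zero_of_mulVec_eq_zero hdet h

lemma jordan_zero_mulVec {F : Type*} [Field F] (m : ℕ) (x : Fin m → F) (i j : Fin m)
    (hij : (i : ℕ) + 1 = j) : (jordanBlock (0 : F) m).mulVec x i = x j := by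
  rw [Matrix.mulVec, dotProduct, Finset.sum_eq_single j]
  · have : i ≠ j := by rintro rfl; omega
    simp [jordanBlock, this, hij]
  · intro b _ hb
    have : ¬ ((i : ℕ) + 1 = b) := fun h => hb (Fin.ext (by omega))
    simp [jordanBlock, this]
  · simp

lemma blockDiagonal_mulVec' {F : Type*} [Field F] {r : ℕ} (sz : Fin r → ℕ)
    (M : ∀ i, Matrix (Fin (sz i)) (Fin (sz i)) F) (x : (Σ i : Fin r, Fin (sz i)) → F)
    (i : Fin r) (a : Fin (sz i)) :
    ((Matrix.blockDiagonal' M).mulVec x) ⟨i, a⟩ = (M i).mulVec (fun b => x ⟨i, b⟩) a := by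
  rw [Matrix.mulVec, dotProduct, Fintype.sum_sigma, Finset.sum_eq_single i]
  · simp [Matrix.mulVec, dotProduct, Matrix.blockDiagonal'_apply_eq]
  · intro b _ hb
    apply Finset.sum_eq_zero
    intro c _
    rw [Matrix.blockDiagonal'_apply_ne _ _ _ (Ne.symm hb), zero_mul]
  · simp

lemma core_jordan {F : Type*} [Field F] [DecidableEq F] [IsAlgClosed F] [CharZero F] {r : ℕ}
    (k : ℕ) (hk : 2 ≤ k)
    (sz : Fin r → ℕ) (hsz : ∀ i, 0 < sz i) (lam : Fin r → F)
    (hone : (Finset.univ.filter (fun i : Fin r => lam i = 0)).card ≤ 1)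
    (C : Matrix (Σ i : Fin r, Fin (sz i)) (Σ i : Fin r, Fin (sz i)) F) :
    ∃ X₁ X₂ : Matrix (Σ i : Fin r, Fin (sz i)) (Σ i : Fin r, Fin (sz i)) F,
      C = X₁ ^ k + Matrix.blockDiagonal' (fun i => jordanBlock (lam i) (sz i)) * X₂ ^ k := by
  set J := Matrix.blockDiagonal' (fun i => jordanBlock (lam i) (sz i)) with hJ
  have hblock : ∀ x, J.mulVec x = 0 → ∀ i, lam i ≠ 0 → ∀ a, x ⟨i, a⟩ = 0 := by
    intro x hx i hi a
    have := jordan_ker (sz i) (lam i) hi (fun b => x ⟨i, b⟩) (by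
      ext b
      rw [← blockDiagonal_mulVec' sz (fun i => jordanBlock (lam i) (sz i)) x i b]
      exact congrFun hx ⟨i, b⟩)
    exact congrFun this a
  by_cases hz : ∃ i, lam i = 0
  · obtain ⟨p, hp⟩ := hz
    have huniq : ∀ i, i ≠ p → lam i ≠ 0 := by
      intro i hi h
      exact hi (Finset.card_le_one.1 hone i (by simp [h]) p (by simp [hp]))
    have hpos := hsz p
    let i₀ : Σ i : Fin r, Fin (sz i) := ⟨p, ⟨sz p - 1, by omega⟩⟩
    let j₀ : Σ i : Fin r, Fin (sz i) := ⟨p, ⟨0, hpos⟩⟩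
    let Q := J + Matrix.vecMulVec (Pi.single i₀ 1) (Pi.single j₀ 1)
    have hrow : ∀ j, J i₀ j = 0 := by
      rintro ⟨j, b⟩
      by_cases h : p = j
      · subst h
        rw [hJ, Matrix.blockDiagonal'_apply_eq, hp]
        have : ¬ (sz p - 1 + 1 = (b : ℕ)) := by have := b.2; omega
        simp [jordanBlock, this]
      · exact Matrix.blockDiagonal'_apply_ne _ _ _ h
    refine core_sing k hk i₀ J Q ?_ ?_ C
    · apply isUnit_of_ker
      intro x hx
      have h0 : ∀ i, J.mulVec x i + (Pi.single i₀ 1 : _ → F) i * x j₀ = 0 := by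
        intro i
        have := congrFun hx i
        simp only [Q, Matrix.add_mulVec, Matrix.vecMulVec_mulVec, Pi.add_apply,
          Pi.smul_apply] at this
        simpa [mul_comm] using this
      have hJ0 : J.mulVec x i₀ = 0 := by
        simp [Matrix.mulVec, dotProduct, hrow]
      have hxj : x j₀ = 0 := by simpa [hJ0] using h0 i₀
      have hJx : J.mulVec x = 0 := by
        ext i; simpa [hxj] using h0 i
      ext ⟨i, a⟩
      by_cases hi : i = p
      · subst hi
        obtain ⟨a, ha⟩ := a
        rcases a with _ | a
        · exact hxj
        · have := congrFun hJx ⟨i, ⟨a, by omega⟩⟩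
          rw [hJ, blockDiagonal_mulVec', hp,
            jordan_zero_mulVec (sz i) _ ⟨a, by omega⟩ ⟨a + 1, ha⟩ rfl] at this
          exact this
      · exact hblock x hJx i (huniq i hi) a
    · ext i j
      rw [Matrix.diagonal_mul]
      by_cases h : i = i₀
      · simp [h, hrow]
      · simp [h, Q, Matrix.vecMulVec_apply]
  · push Not at hz
    apply core_unit k hk
    apply isUnit_of_ker
    intro x hx
    ext ⟨i, a⟩
    exact hblock x hx i (hz i) a



/-- If `J` is in Jordan canonical form with at most one Jordan block corresponding
to the eigenvalue `0`, then `(X₁, X₂) ↦ X₁^k + J X₂^k` is surjective. -/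
theorem stmt_9 {F : Type*} [Field F] [DecidableEq F] [IsAlgClosed F] [CharZero F] {n r : ℕ}
    (k : ℕ) (hk : 2 ≤ k)
    (sz : Fin r → ℕ) (hsz : ∀ i, 0 < sz i) (lam : Fin r → F)
    (hone : (Finset.univ.filter (fun i : Fin r => lam i = 0)).card ≤ 1)
    (e : (Σ i : Fin r, Fin (sz i)) ≃ Fin n)
    (J : Matrix (Fin n) (Fin n) F)
    (hJ : J = Matrix.reindex e e
      (Matrix.blockDiagonal' (fun i => jordanBlock (lam i) (sz i)))) :
    ∀ C : Matrix (Fin n) (Fin n) F,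
      ∃ X₁ X₂ : Matrix (Fin n) (Fin n) F, C = X₁ ^ k + J * X₂ ^ k := by
  intro C
  obtain ⟨X₁, X₂, h⟩ := core_jordan k hk sz hsz lam hone (Matrix.reindexAlgEquiv F F e.symm C)
  refine ⟨Matrix.reindexAlgEquiv F F e X₁, Matrix.reindexAlgEquiv F F e X₂, ?_⟩
  have h2 := congrArg (Matrix.reindexAlgEquiv F F e) h
  rw [map_add, map_mul, map_pow, map_pow] at h2
  rw [hJ]
  rw [← Matrix.reindexAlgEquiv_apply F F, ← h2]
  ext i j
  simp
end

section
/- Let F be an algebraically closed field of characteristic 0 and k ≥ 2 an integer. For A₁ ∈ GL₃(F) and A₂ ∈ M₃(F) with r₀ = nullity(A₂), the map (X₁,X₂) ↦ A₁X₁^k + A₂X₂^k is surjective on M₃(F) if and only if k(r₀ − 1) < 3. -/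
section Helpers
open Polynomial Matrix

lemma kth_root_unit {F : Type*} [Field F] [IsAlgClosed F] [CharZero F] (k : ℕ) (hk : 2 ≤ k)
    (M : Matrix (Fin 3) (Fin 3) F) (hM : IsUnit M) : ∃ X, X ^ k = M := by
  classical
  set f := M.charpoly with hf
  have hmon : f.Monic := M.charpoly_monic
  have h0 : f.eval 0 ≠ 0 := by
    rw [hf, Matrix.eval_charpoly]
    have := (Matrix.isUnit_iff_isUnit_det _).1 hM.neg
    simpa using this.ne_zero
  have hroot : ∀ a : F, ∃ z : F, z ^ k = a := fun a => IsAlgClosed.exists_pow_nat_eq a (by omega)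
  choose rt hrt using hroot
  let p : F[X] := Lagrange.interpolate f.roots.toFinset id rt
  have hp : ∀ a ∈ f.roots, (X - C a) ∣ (p ^ k - X) := by
    intro a ha
    rw [dvd_iff_isRoot, IsRoot.def, eval_sub, eval_pow, eval_X]
    have : eval (id a) p = rt a :=
      Lagrange.eval_interpolate_at_node rt (Set.injOn_id _) (Multiset.mem_toFinset.2 ha)
    rw [id] at this
    rw [this, hrt, sub_self]
  have hdvd : f ∣ (p ^ k - X) ^ (Multiset.card f.roots) := by
    have e : f = (f.roots.map (fun a => X - C a)).prod := by
      exact (IsAlgClosed.splits f).eq_prod_roots_of_monic hmon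
    have e2 : (p ^ k - X) ^ (Multiset.card f.roots) = (f.roots.map (fun _ => p ^ k - X)).prod := by
      simp
    rw [e2]
    nth_rewrite 1 [e]
    exact Multiset.prod_dvd_prod_of_dvd _ _ hp
  let x := AdjoinRoot.mk f p
  let s := AdjoinRoot.mk f X
  have hnil : IsNilpotent (x ^ k - s) := by
    refine ⟨Multiset.card f.roots, ?_⟩
    have := AdjoinRoot.mk_eq_zero.2 hdvd
    simpa only [map_pow, map_sub] using this
  have hs : IsUnit s := by
    have hc : IsCoprime (X : F[X]) f := by
      rw [(irreducible_X).coprime_iff_not_dvd, X_dvd_iff, coeff_zero_eq_eval_zero]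
      exact h0
    obtain ⟨a, b, hab⟩ := hc
    refine IsUnit.of_mul_eq_one (AdjoinRoot.mk f a) ?_
    have := congrArg (AdjoinRoot.mk f) hab
    simp only [map_add, map_mul, map_one, AdjoinRoot.mk_self, mul_zero, add_zero] at this
    rw [mul_comm]; exact this
  have hx : IsUnit x := by
    have h1 := hnil.isUnit_add_left_of_commute hs (Commute.all _ _)
    rw [add_sub_cancel] at h1
    exact (isUnit_pow_iff (by omega)).1 h1
  have hkU : IsUnit (k : AdjoinRoot f) := by
    have : IsUnit (algebraMap F (AdjoinRoot f) (k : F)) :=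
      (IsUnit.mk0 (k : F) (by exact_mod_cast (by omega : k ≠ 0))).map _
    simpa using this
  obtain ⟨r, ⟨-, hr⟩, -⟩ := existsUnique_nilpotent_sub_and_aeval_eq_zero
    (R := AdjoinRoot f) (S := AdjoinRoot f) (P := X ^ k - C s) (x := x)
    (by simpa using hnil) (by simpa [derivative_X_pow] using And.intro hkU (hx.pow (k - 1)))
  obtain ⟨q, rfl⟩ := AdjoinRoot.mk_surjective r
  have hq : AdjoinRoot.mk f (q ^ k - X) = 0 := by
    rw [map_sub, map_pow]
    simpa only [map_sub, map_pow, aeval_X, aeval_C, Algebra.algebraMap_self, RingHom.id_apply] using hr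
  obtain ⟨g, hg⟩ := AdjoinRoot.mk_eq_zero.1 hq
  refine ⟨aeval M q, ?_⟩
  have := congrArg (aeval M) hg
  rw [map_mul, hf, Matrix.aeval_self_charpoly, zero_mul] at this
  simpa [sub_eq_zero] using this

lemma exists_shift {F : Type*} [Field F] [Infinite F] {n : Type*} [Fintype n] [DecidableEq n]
    (M : Matrix n n F) : ∃ t : F, t ≠ 0 ∧ (M - Matrix.scalar n t).det ≠ 0 := by
  classical
  obtain ⟨t, ht⟩ := Infinite.exists_notMem_finset (insert 0 M.charpoly.roots.toFinset)
  simp only [Finset.mem_insert, Multiset.mem_toFinset, not_or] at ht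
  refine ⟨t, ht.1, fun h => ht.2 ?_⟩
  rw [mem_roots M.charpoly_monic.ne_zero, IsRoot.def, Matrix.eval_charpoly,
    ← neg_sub, Matrix.det_neg, h, mul_zero]

lemma diag_perm {F : Type*} [Field F] (σ : Equiv.Perm (Fin 3)) (d : Fin 3 → F) :
    ∃ P Q : Matrix (Fin 3) (Fin 3) F, IsUnit P ∧ IsUnit Q ∧
      diagonal d = P * diagonal (d ∘ σ) * Q := by
  have h1 : (σ.permMatrix F) * (σ⁻¹.permMatrix F) = 1 := by
    rw [← Matrix.permMatrix_mul]; simp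
  have h2 : (σ⁻¹.permMatrix F) * (σ.permMatrix F) = 1 := by
    rw [← Matrix.permMatrix_mul]; simp
  refine ⟨σ⁻¹.permMatrix F, σ.permMatrix F, IsUnit.of_mul_eq_one _ h2, IsUnit.of_mul_eq_one _ h1, ?_⟩
  have : σ.permMatrix F * diagonal d = diagonal (d ∘ σ) * σ.permMatrix F := by
    ext i j
    simp [Matrix.diagonal_mul, Matrix.mul_diagonal, Equiv.Perm.permMatrix, PEquiv.toMatrix_apply]
    split_ifs with hij
    · rw [hij]
    · rfl
  rw [mul_assoc, ← this, ← mul_assoc, h2, one_mul]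

lemma diag_norm {F : Type*} [Field F] (d : Fin 3 → F) :
    ∃ P Q : Matrix (Fin 3) (Fin 3) F, IsUnit P ∧ IsUnit Q ∧
      ((diagonal d = P * diagonal ![1, 1, 1] * Q) ∨ (diagonal d = P * diagonal ![1, 1, 0] * Q) ∨
       (diagonal d = P * diagonal ![1, 0, 0] * Q) ∨ (diagonal d = P * diagonal ![0, 0, 0] * Q)) := by
  classical
  -- first scale
  have key : ∀ (e : Fin 3 → F), (∃ σ : Equiv.Perm (Fin 3),
      (fun i => if d i = 0 then (0 : F) else 1) ∘ σ = e) →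
      ∃ P Q : Matrix (Fin 3) (Fin 3) F, IsUnit P ∧ IsUnit Q ∧ diagonal d = P * diagonal e * Q := by
    rintro e ⟨σ, rfl⟩
    obtain ⟨P, Q, hP, hQ, h⟩ := diag_perm σ (fun i => if d i = 0 then (0 : F) else 1)
    refine ⟨P, Q * diagonal (fun i => if d i = 0 then 1 else d i), hP, hQ.mul ?_, ?_⟩
    · rw [Matrix.isUnit_iff_isUnit_det, det_diagonal, isUnit_iff_ne_zero]
      refine Finset.prod_ne_zero_iff.2 fun i _ => ?_
      split_ifs with hi
      · exact one_ne_zero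
      · exact hi
    · rw [← mul_assoc, ← h, diagonal_mul_diagonal]
      congr 1
      ext i
      by_cases hi : d i = 0 <;> simp [hi]
  by_cases h0 : d 0 = 0 <;> by_cases h1 : d 1 = 0 <;> by_cases h2 : d 2 = 0
  · obtain ⟨P, Q, hP, hQ, h⟩ := key ![0, 0, 0]
      ⟨1, by ext i; fin_cases i <;> simp [h0, h1, h2]⟩
    exact ⟨P, Q, hP, hQ, Or.inr (Or.inr (Or.inr h))⟩
  · obtain ⟨P, Q, hP, hQ, h⟩ := key ![1, 0, 0]
      ⟨Equiv.swap 0 2, by ext i; fin_cases i <;> simp [h0, h1, h2, Equiv.swap_apply_def]⟩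
    exact ⟨P, Q, hP, hQ, Or.inr (Or.inr (Or.inl h))⟩
  · obtain ⟨P, Q, hP, hQ, h⟩ := key ![1, 0, 0]
      ⟨Equiv.swap 0 1, by ext i; fin_cases i <;> simp [h0, h1, h2, Equiv.swap_apply_def]⟩
    exact ⟨P, Q, hP, hQ, Or.inr (Or.inr (Or.inl h))⟩
  · obtain ⟨P, Q, hP, hQ, h⟩ := key ![1, 1, 0]
      ⟨Equiv.swap 0 2, by ext i; fin_cases i <;> simp [h0, h1, h2, Equiv.swap_apply_def]⟩
    exact ⟨P, Q, hP, hQ, Or.inr (Or.inl h)⟩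
  · obtain ⟨P, Q, hP, hQ, h⟩ := key ![1, 0, 0]
      ⟨1, by ext i; fin_cases i <;> simp [h0, h1, h2]⟩
    exact ⟨P, Q, hP, hQ, Or.inr (Or.inr (Or.inl h))⟩
  · obtain ⟨P, Q, hP, hQ, h⟩ := key ![1, 1, 0]
      ⟨Equiv.swap 1 2, by ext i; fin_cases i <;> simp [h0, h1, h2, Equiv.swap_apply_def]⟩
    exact ⟨P, Q, hP, hQ, Or.inr (Or.inl h)⟩
  · obtain ⟨P, Q, hP, hQ, h⟩ := key ![1, 1, 0]
      ⟨1, by ext i; fin_cases i <;> simp [h0, h1, h2]⟩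
    exact ⟨P, Q, hP, hQ, Or.inr (Or.inl h)⟩
  · obtain ⟨P, Q, hP, hQ, h⟩ := key ![1, 1, 1]
      ⟨1, by ext i; fin_cases i <;> simp [h0, h1, h2]⟩
    exact ⟨P, Q, hP, hQ, Or.inl h⟩

lemma mat_norm {F : Type*} [Field F] (B : Matrix (Fin 3) (Fin 3) F) :
    ∃ P Q : Matrix (Fin 3) (Fin 3) F, IsUnit P ∧ IsUnit Q ∧
      ((B = P * diagonal ![1, 1, 1] * Q) ∨ (B = P * diagonal ![1, 1, 0] * Q) ∨
       (B = P * diagonal ![1, 0, 0] * Q) ∨ (B = P * diagonal ![0, 0, 0] * Q)) := by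
  obtain ⟨L, L', d, h⟩ := Matrix.Pivot.exists_list_transvec_mul_diagonal_mul_list_transvec B
  obtain ⟨P, Q, hP, hQ, hd⟩ := diag_norm d
  refine ⟨(L.map TransvectionStruct.toMatrix).prod * P, Q * (L'.map TransvectionStruct.toMatrix).prod,
    IsUnit.mul ?_ hP, hQ.mul ?_, ?_⟩
  · rw [Matrix.isUnit_iff_isUnit_det]; simp
  · rw [Matrix.isUnit_iff_isUnit_det]; simp
  · rcases hd with hd | hd | hd | hd <;> rw [hd] at h
    · left; rw [h]; simp only [mul_assoc]
    · right; left; rw [h]; simp only [mul_assoc]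
    · right; right; left; rw [h]; simp only [mul_assoc]
    · right; right; right; rw [h]; simp only [mul_assoc]

/-- nullity of a product with invertible factors -/
lemma nullity_eq {F : Type*} [Field F] (P Q B : Matrix (Fin 3) (Fin 3) F)
    (hP : IsUnit P) (hQ : IsUnit Q) :
    B.rank + Module.finrank F (LinearMap.ker (P * B * Q).mulVecLin) = 3 := by
  have h := LinearMap.finrank_range_add_finrank_ker (P * B * Q).mulVecLin
  have h2 : (P * B * Q).rank = B.rank := by
    rw [rank_mul_eq_left_of_isUnit_det _ _ ((Matrix.isUnit_iff_isUnit_det _).1 hQ),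
      rank_mul_eq_right_of_isUnit_det _ _ ((Matrix.isUnit_iff_isUnit_det _).1 hP)]
  rw [← h2, Matrix.rank, h]
  simp

lemma rk {F : Type*} [Field F] : (diagonal ![(1 : F), 1, 1]).rank = 3 ∧
    (diagonal ![(1 : F), 1, 0]).rank = 2 ∧ (diagonal ![(1 : F), 0, 0]).rank = 1 ∧
    (diagonal ![(0 : F), 0, 0]).rank = 0 := by
  classical
  refine ⟨?_, ?_, ?_, ?_⟩ <;> rw [rank_diagonal, Fintype.card_subtype] <;>
    simp [Finset.filter, Finset.univ, Fintype.elems, List.finRange_succ]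

lemma rank3 {F : Type*} [Field F] [IsAlgClosed F] [CharZero F] (k : ℕ) (hk : 2 ≤ k)
    (C : Matrix (Fin 3) (Fin 3) F) :
    ∃ X D, (IsUnit D ∨ D = 0) ∧ C = X ^ k + diagonal ![(1 : F), 1, 1] * D := by
  have : Infinite F := IsAlgClosed.instInfinite
  obtain ⟨t, ht, h⟩ := exists_shift C
  obtain ⟨X, hX⟩ := kth_root_unit k hk _ ((Matrix.isUnit_iff_isUnit_det _).2 h.isUnit)
  have e : diagonal ![(1 : F), 1, 1] = 1 := by
    ext i j; fin_cases i <;> fin_cases j <;> simp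
  refine ⟨X, Matrix.scalar _ t, Or.inl ((IsUnit.mk0 t ht).map (Matrix.scalar (Fin 3))), ?_⟩
  rw [hX, e]; simp

lemma rank2 {F : Type*} [Field F] [IsAlgClosed F] [CharZero F] (k : ℕ) (hk : 2 ≤ k)
    (C : Matrix (Fin 3) (Fin 3) F) :
    ∃ X D, (IsUnit D ∨ D = 0) ∧ C = X ^ k + diagonal ![(1 : F), 1, 0] * D := by
  have : Infinite F := IsAlgClosed.instInfinite
  have key : ∀ M D : Matrix (Fin 3) (Fin 3) F, (∃ X, X ^ k = M) → D.det ≠ 0 →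
      C = M + diagonal ![(1 : F), 1, 0] * D →
      ∃ X D, (IsUnit D ∨ D = 0) ∧ C = X ^ k + diagonal ![(1 : F), 1, 0] * D := by
    rintro M D ⟨X, rfl⟩ hD h
    exact ⟨X, D, Or.inl ((Matrix.isUnit_iff_isUnit_det _).2 hD.isUnit), h⟩
  by_cases h2 : C 2 2 = 0
  · by_cases h1 : C 2 1 = 0
    · by_cases h0 : C 2 0 = 0
      · obtain ⟨t, ht, h⟩ := exists_shift !![C 0 0, C 0 1; C 1 0, C 1 1]
        simp [det_fin_two] at h
        refine key (diagonal ![t, t, 0])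
          !![C 0 0 - t, C 0 1, C 0 2; C 1 0, C 1 1 - t, C 1 2; 0, 0, 1] ?_ ?_ ?_
        · obtain ⟨z, hz⟩ := IsAlgClosed.exists_pow_nat_eq t (show 0 < k by omega)
          refine ⟨diagonal ![z, z, 0], ?_⟩
          rw [diagonal_pow]
          congr 1
          ext i; fin_cases i <;> simp [hz]; try omega
        · simp [det_fin_three]; intro hh; apply h; linear_combination hh
        · ext i j; fin_cases i <;> fin_cases j <;> simp [h0, h1, h2]
      · obtain ⟨t, ht, h⟩ := exists_shift !![C 0 1, C 0 2; C 1 1, C 1 2]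
        simp [det_fin_two] at h
        refine key !![0, t, 0; 0, 0, t; C 2 0, C 2 1, C 2 2]
          !![C 0 0, C 0 1 - t, C 0 2; C 1 0, C 1 1, C 1 2 - t; 1, 0, 0] ?_ ?_ ?_
        · apply kth_root_unit k hk
          rw [Matrix.isUnit_iff_isUnit_det, isUnit_iff_ne_zero]
          simp [det_fin_three, ht, h0]
        · simp [det_fin_three]; intro hh; apply h; linear_combination hh
        · ext i j; fin_cases i <;> fin_cases j <;> simp
    · obtain ⟨t, ht, h⟩ := exists_shift !![C 0 0, C 0 2; C 1 0, C 1 2]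
      simp [det_fin_two] at h
      refine key !![t, 0, 0; 0, 0, t; C 2 0, C 2 1, C 2 2]
        !![C 0 0 - t, C 0 1, C 0 2; C 1 0, C 1 1, C 1 2 - t; 0, 1, 0] ?_ ?_ ?_
      · apply kth_root_unit k hk
        rw [Matrix.isUnit_iff_isUnit_det, isUnit_iff_ne_zero]
        simp [det_fin_three, ht, h1]
      · simp [det_fin_three]; intro hh; apply h; linear_combination -hh
      · ext i j; fin_cases i <;> fin_cases j <;> simp
  · obtain ⟨t, ht, h⟩ := exists_shift !![C 0 0, C 0 1; C 1 0, C 1 1]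
    simp [det_fin_two] at h
    refine key !![t, 0, 0; 0, t, 0; C 2 0, C 2 1, C 2 2]
      !![C 0 0 - t, C 0 1, C 0 2; C 1 0, C 1 1 - t, C 1 2; 0, 0, 1] ?_ ?_ ?_
    · apply kth_root_unit k hk
      rw [Matrix.isUnit_iff_isUnit_det, isUnit_iff_ne_zero]
      simp [det_fin_three, ht, h2]
    · simp [det_fin_three]; intro hh; apply h; linear_combination hh
    · ext i j; fin_cases i <;> fin_cases j <;> simp

/-- any first row is attained by a unit or zero matrix -/
lemma row_unit {F : Type*} [Field F] (a b c : F) : ∃ D : Matrix (Fin 3) (Fin 3) F,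
    (IsUnit D ∨ D = 0) ∧ D 0 0 = a ∧ D 0 1 = b ∧ D 0 2 = c := by
  by_cases ha : a = 0
  · by_cases hb : b = 0
    · by_cases hc : c = 0
      · exact ⟨0, Or.inr rfl, by simp [ha, hb, hc]⟩
      · refine ⟨!![a, b, c; 1, 0, 0; 0, 1, 0], Or.inl ?_, by simp⟩
        rw [Matrix.isUnit_iff_isUnit_det, isUnit_iff_ne_zero]; simp [det_fin_three, hc]
    · refine ⟨!![a, b, c; 1, 0, 0; 0, 0, 1], Or.inl ?_, by simp⟩
      rw [Matrix.isUnit_iff_isUnit_det, isUnit_iff_ne_zero]; simp [det_fin_three, hb]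
  · refine ⟨!![a, b, c; 0, 1, 0; 0, 0, 1], Or.inl ?_, by simp⟩
    rw [Matrix.isUnit_iff_isUnit_det, isUnit_iff_ne_zero]; simp [det_fin_three, ha]

lemma rank1 {F : Type*} [Field F] [IsAlgClosed F] [CharZero F]
    (C : Matrix (Fin 3) (Fin 3) F) :
    ∃ X D, (IsUnit D ∨ D = 0) ∧ C = X ^ 2 + diagonal ![(1 : F), 0, 0] * D := by
  have key : ∀ M : Matrix (Fin 3) (Fin 3) F, (∃ X, X ^ 2 = M) → (∀ j, M 1 j = C 1 j) →
      (∀ j, M 2 j = C 2 j) →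
      ∃ X D, (IsUnit D ∨ D = 0) ∧ C = X ^ 2 + diagonal ![(1 : F), 0, 0] * D := by
    rintro M ⟨X, rfl⟩ h1 h2
    obtain ⟨D, hD, h⟩ := row_unit (C 0 0 - (X ^ 2) 0 0) (C 0 1 - (X ^ 2) 0 1) (C 0 2 - (X ^ 2) 0 2)
    refine ⟨X, D, hD, ?_⟩
    ext i j; fin_cases i <;> fin_cases j <;> simp [h, h1, h2]
  have key2 : ∀ a b c : F, (!![a, b, c; C 1 0, C 1 1, C 1 2; C 2 0, C 2 1, C 2 2]).det ≠ 0 →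
      ∃ X D, (IsUnit D ∨ D = 0) ∧ C = X ^ 2 + diagonal ![(1 : F), 0, 0] * D := by
    intro a b c h
    refine key _ (kth_root_unit 2 le_rfl _ ((Matrix.isUnit_iff_isUnit_det _).2 h.isUnit)) ?_ ?_ <;>
      intro j <;> fin_cases j <;> simp
  have key3 : ∀ p q x y z : F, C 1 0 = p * x → C 1 1 = p * y → C 1 2 = p * z →
      C 2 0 = q * x → C 2 1 = q * y → C 2 2 = q * z →
      ∃ X D, (IsUnit D ∨ D = 0) ∧ C = X ^ 2 + diagonal ![(1 : F), 0, 0] * D := by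
    intro p q x y z h1 h2 h3 h4 h5 h6
    refine key _ ⟨!![x, y, z; p, 0, 0; q, 0, 0], rfl⟩ ?_ ?_ <;>
      intro j <;> fin_cases j <;> simp [pow_two, Matrix.mul_apply, Fin.sum_univ_three, *]
  by_cases m0 : C 1 1 * C 2 2 - C 1 2 * C 2 1 = 0
  swap
  · exact key2 1 0 0 (by simpa [det_fin_three] using m0)
  by_cases m1 : C 1 0 * C 2 2 - C 1 2 * C 2 0 = 0
  swap
  · refine key2 0 1 0 (fun h => m1 ?_)
    simp [det_fin_three] at h; linear_combination -h
  by_cases m2 : C 1 0 * C 2 1 - C 1 1 * C 2 0 = 0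
  swap
  · refine key2 0 0 1 (fun h => m2 ?_)
    simp [det_fin_three] at h; linear_combination h
  by_cases x0 : C 1 0 = 0
  · by_cases x1 : C 1 1 = 0
    · by_cases x2 : C 1 2 = 0
      · exact key3 0 1 (C 2 0) (C 2 1) (C 2 2) (by simpa) (by simpa) (by simpa)
          (by simp) (by simp) (by simp)
      · refine key3 1 (C 2 2 / C 1 2) (C 1 0) (C 1 1) (C 1 2) (by simp) (by simp) (by simp)
          ?_ ?_ ?_ <;> field_simp
        · linear_combination -m1
        · linear_combination -m0
    · refine key3 1 (C 2 1 / C 1 1) (C 1 0) (C 1 1) (C 1 2) (by simp) (by simp) (by simp)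
          ?_ ?_ ?_ <;> field_simp
      · linear_combination -m2
      · linear_combination m0
  · refine key3 1 (C 2 0 / C 1 0) (C 1 0) (C 1 1) (C 1 2) (by simp) (by simp) (by simp)
          ?_ ?_ ?_ <;> field_simp
    · linear_combination m2
    · linear_combination m1

lemma ker_stab {F : Type*} [Field F] (X : Matrix (Fin 3) (Fin 3) F) (m n : ℕ) (hm : 3 ≤ m)
    (v : Fin 3 → F) (h : (X ^ n) *ᵥ v = 0) : (X ^ m) *ᵥ v = 0 := by
  have e : ∀ n, (X ^ n) *ᵥ v = ((Matrix.toLin' X) ^ n) v := by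
    intro n; rw [← Matrix.toLin'_pow, Matrix.toLin'_apply]
  rw [e] at h ⊢
  have h3 : Module.finrank F (Fin 3 → F) ≤ m := by simpa using hm
  have h4 : Module.finrank F (Fin 3 → F) ≤ n + m := by omega
  rw [← LinearMap.mem_ker, Module.End.ker_pow_eq_ker_pow_finrank_of_le h3,
    ← Module.End.ker_pow_eq_ker_pow_finrank_of_le h4, LinearMap.mem_ker, add_comm, pow_add,
    Module.End.mul_apply, h, map_zero]

lemma no_root1 {F : Type*} [Field F] (k : ℕ) (hk : 3 ≤ k) (a b c : F)
    (X : Matrix (Fin 3) (Fin 3) F) : X ^ k ≠ !![a, b, c; 0, 0, 1; 0, 0, 0] := by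
  intro h
  have key : ∀ v : Fin 3 → F, (X ^ k) *ᵥ ((X ^ k) *ᵥ v) = 0 → (X ^ k) *ᵥ v = 0 := by
    intro v hv
    rw [Matrix.mulVec_mulVec, ← pow_add] at hv
    exact ker_stab X k _ hk v hv
  rw [h] at key
  by_cases ha : a = 0
  · by_cases hb : b = 0
    · have := congrFun (key ![0, 0, 1] (by
        ext i; fin_cases i <;> simp [Matrix.mulVec, dotProduct, Fin.sum_univ_three, ha, hb])) 1
      simp [Matrix.mulVec, dotProduct, Fin.sum_univ_three] at this
    · have := congrFun (key ![0, 1, 0] (by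
        ext i; fin_cases i <;> simp [Matrix.mulVec, dotProduct, Fin.sum_univ_three, ha])) 0
      simp [Matrix.mulVec, dotProduct, Fin.sum_univ_three, hb] at this
  · have := congrFun (key ![-(a * c + b) / a ^ 2, 0, 1] (by
        ext i; fin_cases i <;> simp [Matrix.mulVec, dotProduct, Fin.sum_univ_three]
        field_simp; ring)) 1
    simp [Matrix.mulVec, dotProduct, Fin.sum_univ_three] at this

lemma no_root0 {F : Type*} [Field F] (k : ℕ) (hk : 2 ≤ k)
    (X : Matrix (Fin 3) (Fin 3) F) : X ^ k ≠ !![0, 1, 0; 0, 0, 1; 0, 0, 0] := by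
  intro h
  have h3 : X ^ (k * 3) *ᵥ ![0, 0, 1] = 0 := by
    rw [pow_mul, h, pow_succ, pow_two, ← Matrix.mulVec_mulVec, ← Matrix.mulVec_mulVec]
    ext i; fin_cases i <;> simp [Matrix.mulVec, dotProduct, Fin.sum_univ_three]
  have h2 := ker_stab X (k * 2) _ (by omega) _ h3
  rw [pow_mul, h, pow_two, ← Matrix.mulVec_mulVec] at h2
  have := congrFun h2 0
  simp [Matrix.mulVec, dotProduct, Fin.sum_univ_three] at this

lemma conj_pow3 {F : Type*} [Field F] (P X : Matrix (Fin 3) (Fin 3) F) (hP : IsUnit P) (k : ℕ) :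
    (P * X * P⁻¹) ^ k = P * X ^ k * P⁻¹ := by
  obtain ⟨u, rfl⟩ := hP
  rw [← Matrix.coe_units_inv]
  exact Units.conj_pow u X k

/-- transfer of surjectivity -/
lemma surj_transfer {F : Type*} [Field F] [IsAlgClosed F] [CharZero F]
    (k : ℕ) (hk : 2 ≤ k) (A₁ A₂ P Q E : Matrix (Fin 3) (Fin 3) F) (hA₁ : IsUnit A₁)
    (hP : IsUnit P) (hQ : IsUnit Q) (h : A₁⁻¹ * A₂ = P * E * Q)
    (H : ∀ C, ∃ X D, (IsUnit D ∨ D = 0) ∧ C = X ^ k + E * D)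
    (C : Matrix (Fin 3) (Fin 3) F) : ∃ X₁ X₂, C = A₁ * X₁ ^ k + A₂ * X₂ ^ k := by
  have dP := (Matrix.isUnit_iff_isUnit_det _).1 hP
  have dQ := (Matrix.isUnit_iff_isUnit_det _).1 hQ
  have dA := (Matrix.isUnit_iff_isUnit_det _).1 hA₁
  obtain ⟨X, D, hD, hC⟩ := H (P⁻¹ * (A₁⁻¹ * C) * P)
  have hY : ∃ Y, Y ^ k = Q⁻¹ * D * P⁻¹ := by
    rcases hD with hD | rfl
    · refine kth_root_unit k hk _ (IsUnit.mul (IsUnit.mul ?_ hD) ?_)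
      · exact (Matrix.isUnit_nonsing_inv_iff).2 hQ
      · exact (Matrix.isUnit_nonsing_inv_iff).2 hP
    · exact ⟨0, by simp; omega⟩
  obtain ⟨Y, hY⟩ := hY
  refine ⟨P * X * P⁻¹, Y, ?_⟩
  have hA2 : A₂ = A₁ * (P * E * Q) := by
    rw [← h, Matrix.mul_nonsing_inv_cancel_left _ _ dA]
  have hX : X ^ k = P⁻¹ * (A₁⁻¹ * C) * P - E * D := by rw [hC]; simp
  rw [conj_pow3 _ _ hP, hY, hX, hA2]
  have e1 : P * (P⁻¹ * (A₁⁻¹ * C) * P - E * D) * P⁻¹ = A₁⁻¹ * C - P * E * D * P⁻¹ := by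
    rw [mul_sub, sub_mul, mul_assoc P⁻¹, Matrix.mul_nonsing_inv_cancel_left _ _ dP,
      Matrix.mul_nonsing_inv_cancel_right _ _ dP]
    simp only [mul_assoc]
  have e2 : A₁ * (P * E * Q) * (Q⁻¹ * D * P⁻¹) = A₁ * (P * E * D * P⁻¹) := by
    simp only [mul_assoc]
    rw [Matrix.mul_nonsing_inv_cancel_left _ _ dQ]
  rw [e1, e2, ← mul_add, sub_add_cancel, Matrix.mul_nonsing_inv_cancel_left _ _ dA]

lemma surj_transfer' {F : Type*} [Field F]
    (k : ℕ) (A₁ A₂ P Q E : Matrix (Fin 3) (Fin 3) F) (hA₁ : IsUnit A₁)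
    (hP : IsUnit P) (h : A₁⁻¹ * A₂ = P * E * Q)
    (H : ∀ C, ∃ X₁ X₂, C = A₁ * X₁ ^ k + A₂ * X₂ ^ k)
    (C : Matrix (Fin 3) (Fin 3) F) : ∃ X D, C = X ^ k + E * D := by
  have dP := (Matrix.isUnit_iff_isUnit_det _).1 hP
  have dA := (Matrix.isUnit_iff_isUnit_det _).1 hA₁
  obtain ⟨X, Y, hC⟩ := H (A₁ * (P * C * P⁻¹))
  refine ⟨P⁻¹ * X * P, Q * Y ^ k * P, ?_⟩
  have hA2 : A₂ = A₁ * (P * E * Q) := by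
    rw [← h, Matrix.mul_nonsing_inv_cancel_left _ _ dA]
  have e := conj_pow3 P⁻¹ X ((Matrix.isUnit_nonsing_inv_iff).2 hP) k
  rw [Matrix.nonsing_inv_nonsing_inv _ dP] at e
  rw [e]
  rw [hA2, mul_assoc A₁, ← mul_add] at hC
  have h2 := congrArg (fun Z => P⁻¹ * (A₁⁻¹ * Z) * P) hC
  simp only [Matrix.nonsing_inv_mul_cancel_left _ _ dA] at h2
  rw [mul_assoc P, Matrix.nonsing_inv_mul_cancel_left _ _ dP,
    Matrix.nonsing_inv_mul_cancel_right _ _ dP] at h2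
  rw [h2, mul_add, add_mul]
  simp only [mul_assoc]
  rw [Matrix.nonsing_inv_mul_cancel_left _ _ dP]

end Helpers


/-- For `A₁ ∈ GL₃(F)`, `A₂ ∈ M₃(F)` with `r₀ = nullity(A₂)`, the map
`(X₁,X₂) ↦ A₁ X₁^k + A₂ X₂^k` is surjective on `M₃(F)` iff `k (r₀ - 1) < 3`. -/
theorem stmt_16 {F : Type*} [Field F] [IsAlgClosed F] [CharZero F]
    (k : ℕ) (hk : 2 ≤ k)
    (A₁ A₂ : Matrix (Fin 3) (Fin 3) F) (hA₁ : IsUnit A₁)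
    (r₀ : ℕ) (hr₀ : r₀ = Module.finrank F (LinearMap.ker A₂.mulVecLin)) :
    (∀ C : Matrix (Fin 3) (Fin 3) F,
      ∃ X₁ X₂ : Matrix (Fin 3) (Fin 3) F, C = A₁ * X₁ ^ k + A₂ * X₂ ^ k) ↔
    k * (r₀ - 1) < 3 := by
  obtain ⟨P, Q, hP, hQ, hB⟩ := mat_norm (A₁⁻¹ * A₂)
  have dA := (Matrix.isUnit_iff_isUnit_det _).1 hA₁
  have null : ∀ E, A₁⁻¹ * A₂ = P * E * Q → E.rank + r₀ = 3 := by
    intro E h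
    have hA2 : A₂ = (A₁ * P) * E * Q := by
      rw [mul_assoc A₁, mul_assoc A₁, ← h, Matrix.mul_nonsing_inv_cancel_left _ _ dA]
    rw [hr₀, hA2]
    exact nullity_eq _ _ _ (hA₁.mul hP) hQ
  obtain ⟨k3, k2, k1, k0⟩ := rk (F := F)
  rcases hB with hB | hB | hB | hB
  · have hr := null _ hB
    have : r₀ = 0 := by omega
    subst this
    exact ⟨fun _ => by simp, fun _ => surj_transfer k hk _ _ _ _ _ hA₁ hP hQ hB (rank3 k hk)⟩
  · have hr := null _ hB
    have : r₀ = 1 := by omega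
    rw [this]
    exact ⟨fun _ => by simp, fun _ => surj_transfer k hk _ _ _ _ _ hA₁ hP hQ hB (rank2 k hk)⟩
  · have hr := null _ hB
    have : r₀ = 2 := by omega
    rw [this]
    constructor
    · intro H
      by_contra hk3
      obtain ⟨X, D, h⟩ := surj_transfer' k _ _ _ _ _ hA₁ hP hB H !![0, 0, 0; 0, 0, 1; 0, 0, 0]
      refine no_root1 k (by omega) (-D 0 0) (-D 0 1) (-D 0 2) X ?_
      rw [← sub_eq_iff_eq_add] at h
      rw [← h]
      ext i j; fin_cases i <;> fin_cases j <;> simp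
    · intro h
      have : k = 2 := by omega
      subst this
      exact surj_transfer 2 hk _ _ _ _ _ hA₁ hP hQ hB rank1
  · have hr := null _ hB
    have : r₀ = 3 := by omega
    rw [this]
    constructor
    · intro H
      exfalso
      obtain ⟨X, D, h⟩ := surj_transfer' k _ _ _ _ _ hA₁ hP hB H !![0, 1, 0; 0, 0, 1; 0, 0, 0]
      refine no_root0 k hk X ?_
      rw [h]
      ext i j; fin_cases i <;> simp
    · intro h; omega
end

section
/- Let F be an algebraically closed field of characteristic 0 and k ≥ 2 an integer. For A₁ ∈ GL₄(F) and A₂ ∈ M₄(F) with r₀ = nullity(A₂), the map (X₁,X₂) ↦ A₁X₁^k + A₂X₂^k is surjective on M₄(F) if and only if k(r₀ − 1) < 4. In particular, for k = 2 or k = 3 surjectivity holds iff r₀ ≤ 2, and for k ≥ 4 surjectivity holds iff r₀ ≤ 1. -/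
open Polynomial in
/-- Roots of invertible endomorphisms, as elements of the generated algebra. -/
theorem exists_root_of_isUnit_s18 {F V : Type*} [Field F] [IsAlgClosed F] [CharZero F]
    [AddCommGroup V] [Module F V] [FiniteDimensional F V]
    (k : ℕ) (hk : 2 ≤ k) (f : Module.End F V) (hf : IsUnit f) :
    ∃ g ∈ Algebra.adjoin F {f}, g ^ k = f := by
  classical
  have hk0 : k ≠ 0 := by omega
  let m := minpoly F f
  have hm : m.Monic := minpoly.monic (Algebra.IsIntegral.isIntegral f)
  choose s hs using fun a : F => IsAlgClosed.exists_pow_nat_eq a (Nat.pos_of_ne_zero hk0)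
  let p : F[X] := Lagrange.interpolate m.roots.toFinset id s
  have hp : ∀ r ∈ m.roots, p.eval r = s r := by
    intro r hr
    exact Lagrange.eval_interpolate_at_node (v := id) s (Set.injOn_id _) (Multiset.mem_toFinset.2 hr)
  let q : F[X] := p ^ k - X
  have hq : ∀ r ∈ m.roots, (X - C r) ∣ q := by
    intro r hr
    rw [dvd_iff_isRoot]
    simp [q, hp r hr, hs]
  have hmq : m ∣ q ^ m.roots.card := by
    have h1 := (IsAlgClosed.splits m).eq_prod_roots_of_monic hm
    have h2 : (m.roots.map fun _ => q).prod = q ^ m.roots.card := by simp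
    rw [← h2]
    have h3 := Multiset.prod_dvd_prod_of_dvd _ _ hq
    rwa [← h1] at h3
  have hnil : IsNilpotent (aeval f q) := by
    refine ⟨m.roots.card, ?_⟩
    rw [← map_pow]
    obtain ⟨c, hc⟩ := hmq
    rw [hc, map_mul, minpoly.aeval, zero_mul]
  let S := Algebra.adjoin F {f}
  let f' : S := ⟨f, Algebra.self_mem_adjoin_singleton F f⟩
  let y : S := aeval f' p
  have hy : IsNilpotent (y ^ k - f') := by
    obtain ⟨n, hn⟩ := hnil
    refine ⟨n, Subtype.ext ?_⟩
    have : ((aeval f' p : S) : Module.End F V) = aeval f p := by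
      exact (Polynomial.aeval_algHom_apply S.val f' p).symm
    simp only [q, map_sub, map_pow, aeval_X] at hn
    simpa [y, this] using hn
  have hf' : IsUnit f' := by
    have : IsUnit f' ↔ IsUnit (f' : Module.End F V) := by
      constructor
      · intro h; exact h.map S.val
      · intro h
        have : IsArtinianRing S := IsArtinianRing.of_finite F S
        apply IsArtinianRing.isUnit_of_mem_nonZeroDivisors
        rw [mem_nonZeroDivisors_iff_right]
        intro z hz
        apply Subtype.ext
        have hz' : (z : Module.End F V) * f = 0 := congrArg Subtype.val hz
        simpa using (h.mul_left_eq_zero).1 hz'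
    exact this.2 hf
  have hyk : IsUnit (y ^ k) := by
    have h3 := hy.isUnit_add_left_of_commute hf' (Commute.all _ _)
    simpa using h3
  have hyu : IsUnit y := (isUnit_pow_iff hk0).1 hyk
  let P : S[X] := X ^ k - C f'
  have hku : IsUnit ((k : S)) := by
    have : IsUnit (algebraMap F S (k : F)) := (IsUnit.mk0 _ (by exact_mod_cast hk0)).map _
    simpa using this
  obtain ⟨r, ⟨-, hr⟩, -⟩ := existsUnique_nilpotent_sub_and_aeval_eq_zero (P := P) (x := y)
    (by simpa [P] using hy) (by
      have h5 := hku.mul (hyu.pow (k-1))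
      simpa [P, derivative_X_pow] using h5)
  refine ⟨r, r.2, ?_⟩
  have : r ^ k = f' := by simpa [P, sub_eq_zero] using hr
  simpa using congrArg Subtype.val this

/-- Group-invertible endomorphisms have roots. -/
theorem exists_root_of_disjoint {F V : Type*} [Field F] [IsAlgClosed F] [CharZero F]
    [AddCommGroup V] [Module F V] [FiniteDimensional F V]
    (k : ℕ) (hk : 2 ≤ k) (M : Module.End F V)
    (hM : ∀ v, M (M v) = 0 → M v = 0) :
    ∃ g : Module.End F V, g ^ k = M := by
  have hc : IsCompl (LinearMap.range M) (LinearMap.ker M) := by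
    rw [Submodule.isCompl_iff_disjoint _ _ (LinearMap.finrank_range_add_finrank_ker M).ge]
    rw [Submodule.disjoint_def]
    rintro _ ⟨v, rfl⟩ hv
    exact hM v hv
  let p : Module.End F V := Submodule.projection _ _ hc
  have hMp : M * p = M := by
    ext v
    have := Submodule.sub_projection_mem hc v
    rw [LinearMap.mem_ker, map_sub, sub_eq_zero] at this
    exact this.symm
  have hpM : p * M = M := by
    ext v
    exact Submodule.projection_apply_of_mem_left hc ⟨v, rfl⟩
  have hpp : p * p = p := Submodule.isIdempotentElem_projection hc
  let N := M + (1 - p)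
  have hpN : p * N = M := by simp [N, mul_add, mul_sub, hpM, hpp]
  have hNp : N * p = M := by simp [N, add_mul, sub_mul, hMp, hpp]
  have hN : IsUnit N := by
    rw [LinearMap.isUnit_iff_ker_eq_bot, LinearMap.ker_eq_bot']
    intro v hv
    have h1 : M v = 0 := by
      rw [← hpN, Module.End.mul_apply, hv, map_zero]
    have h2 : p v = 0 := (Submodule.projection_apply_eq_zero_iff hc).2 h1
    simpa [N, h1, h2] using hv
  obtain ⟨g, hg, hgk⟩ := exists_root_of_isUnit_s18 k hk N hN
  have hcomm : Commute p g := by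
    have h1 : Algebra.adjoin F {N} ≤ Subalgebra.centralizer F {p} := by
      rw [Algebra.adjoin_le_iff]
      rintro _ rfl
      rw [SetLike.mem_coe, Subalgebra.mem_centralizer_iff]
      rintro _ rfl
      rw [hpN, hNp]
    exact (Subalgebra.mem_centralizer_iff F).1 (h1 hg) p rfl
  refine ⟨p * g, ?_⟩
  rw [hcomm.mul_pow, hgk, (show IsIdempotentElem p from hpp).pow_eq (by omega), hpN]

/-- An injective map on a subspace extends to an automorphism. -/
theorem exists_equiv_extend {F V : Type*} [Field F]
    [AddCommGroup V] [Module F V] [FiniteDimensional F V]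
    (K : Submodule F V) (f : K →ₗ[F] V) (hf : Function.Injective f) :
    ∃ N : V ≃ₗ[F] V, ∀ x : K, N x = f x := by
  obtain ⟨K', hK⟩ := K.exists_isCompl
  obtain ⟨R', hR⟩ := (LinearMap.range f).exists_isCompl
  let e1 := LinearEquiv.ofInjective f hf
  have h1 := e1.finrank_eq
  have h2 := Submodule.finrank_add_eq_of_isCompl hK
  have h3 := Submodule.finrank_add_eq_of_isCompl hR
  let e2 : K' ≃ₗ[F] R' := LinearEquiv.ofFinrankEq _ _ (by omega)
  refine ⟨(Submodule.prodEquivOfIsCompl _ _ hK).symm ≪≫ₗ (e1.prodCongr e2) ≪≫ₗ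
    Submodule.prodEquivOfIsCompl _ _ hR, fun x => ?_⟩
  simp [e1]

theorem exists_equiv_factor {F V : Type*} [Field F]
    [AddCommGroup V] [Module F V] [FiniteDimensional F V]
    (B D : Module.End F V) (h : ∀ v, D v = 0 ↔ B v = 0) :
    ∃ Z : Module.End F V, IsUnit Z ∧ D = Z * B := by
  obtain ⟨s, hs⟩ := B.rangeRestrict.exists_rightInverse_of_surjective B.range_rangeRestrict
  have hs' : ∀ x, B (s x) = x := fun x => congrArg Subtype.val (LinearMap.congr_fun hs x)
  obtain ⟨N, hN⟩ := exists_equiv_extend (LinearMap.range B) (D ∘ₗ s) (by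
    rw [← LinearMap.ker_eq_bot, LinearMap.ker_eq_bot']
    intro x hx
    have := (h _).1 hx
    rw [hs'] at this
    exact Subtype.ext this)
  refine ⟨N.toLinearMap, ?_, ?_⟩
  · rw [LinearMap.isUnit_iff_ker_eq_bot]; exact N.ker
  · ext v
    have h1 := hN ⟨B v, v, rfl⟩
    have h2 : D (s ⟨B v, v, rfl⟩ - v) = 0 := by rw [h, map_sub, hs', sub_self]
    rw [map_sub, sub_eq_zero] at h2
    simpa [h2] using h1.symm

/-- If `C` agrees with a `k`-th power exactly on `ker B`, then `C` is represented. -/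
theorem rep_of_ker {F V : Type*} [Field F] [IsAlgClosed F] [CharZero F]
    [AddCommGroup V] [Module F V] [FiniteDimensional F V]
    (k : ℕ) (hk : 2 ≤ k) (B C X : Module.End F V)
    (h : ∀ v, C v = (X ^ k) v ↔ B v = 0) :
    ∃ X Y : Module.End F V, C = X ^ k + Y ^ k * B := by
  obtain ⟨Z, hZ, hD⟩ := exists_equiv_factor B (C - X ^ k) (by
    intro v; rw [← h, LinearMap.sub_apply, sub_eq_zero])
  obtain ⟨Y, -, hY⟩ := exists_root_of_isUnit_s18 k hk Z hZ
  exact ⟨X, Y, by rw [hY, ← hD]; abel⟩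

/-- The generic case. -/
theorem rep_generic {F V : Type*} [Field F] [IsAlgClosed F] [CharZero F]
    [AddCommGroup V] [Module F V] [FiniteDimensional F V]
    (k : ℕ) (hk : 2 ≤ k) (B C : Module.End F V)
    (h : ∀ w, B w = 0 → B (C w) = 0 → C (C w) = 0 → C w = 0) :
    ∃ X Y : Module.End F V, C = X ^ k + Y ^ k * B := by
  let K := LinearMap.ker B
  let K0 : Submodule F K := LinearMap.ker (C.domRestrict K)
  obtain ⟨K1, hK1⟩ := K0.exists_isCompl
  let q : K →ₗ[F] K := Submodule.projection _ _ hK1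
  have hq0 : ∀ x : K, C (q x) = 0 := fun x => Submodule.projection_apply_mem hK1 x
  have hq1 : ∀ x : K, C x = 0 → q x = x := fun x hx =>
    Submodule.projection_apply_of_mem_left hK1 hx
  have hqq : ∀ x, q (q x) = q x := fun x => hq1 _ (hq0 x)
  obtain ⟨N, hN⟩ := exists_equiv_extend K (C.domRestrict K + K.subtype ∘ₗ q) (by
    rw [← LinearMap.ker_eq_bot, LinearMap.ker_eq_bot']
    intro x hx
    have hx' : C x = - (q x : V) := eq_neg_of_add_eq_zero_left hx
    have h1 : C x = 0 := by
      apply h x x.2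
      · rw [hx', map_neg, (q x).2, neg_zero]
      · rw [hx', map_neg, hq0, neg_zero]
    have h2 := hq1 x h1
    rw [h1, h2] at hx'
    apply Subtype.ext
    simpa using hx'.symm)
  replace hN : ∀ x : K, N x = C x + q x := hN
  obtain ⟨pr, hpr⟩ := K.subtype.exists_leftInverse_of_injective K.ker_subtype
  replace hpr : ∀ x : K, pr x = x := fun x => LinearMap.congr_fun hpr x
  obtain ⟨t, ht⟩ := (((Module.End.finite_hasEigenvalue
    (N.symm.toLinearMap ∘ₗ C : Module.End F V)).union
      (Set.finite_singleton (0 : F))).infinite_compl).nonempty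
  simp only [Set.mem_compl_iff, Set.mem_union, Set.mem_ofPred_eq, Set.mem_singleton_iff,
    not_or] at ht
  obtain ⟨ht1, ht0⟩ := ht
  have hte : ∀ e, C e = t • N e → e = 0 := by
    intro e he
    by_contra hne
    apply ht1
    apply Module.End.hasEigenvalue_of_hasEigenvector (x := e)
    refine ⟨?_, hne⟩
    rw [Module.End.mem_eigenspace_iff]
    simp [he]
  let D : Module.End F V := K.subtype ∘ₗ (LinearMap.id - q) ∘ₗ pr +
    t • (LinearMap.id - K.subtype ∘ₗ pr)
  have hD : ∀ v, D v = ((pr v - q (pr v) : K) : V) + t • (v - (pr v : V)) := fun v => rfl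
  have hprD : ∀ v, pr (D v) = pr v - q (pr v) := by
    intro v
    rw [hD, map_add, hpr, map_smul, map_sub, hpr, sub_self, smul_zero, add_zero]
  let M : Module.End F V := N.toLinearMap ∘ₗ D
  have hM : ∀ v, M v = N (D v) := fun v => rfl
  have hMK : ∀ x : K, M x = C x := by
    intro x
    rw [hM, hD, hpr, sub_self, smul_zero, add_zero, hN, map_sub, hqq]
    simp [hq0]
  obtain ⟨X, hX⟩ := exists_root_of_disjoint k hk M (by
    intro v hv
    rw [hM (M v)] at hv
    have h1 : D (M v) = 0 := by simpa using hv
    have h2 := hprD (M v)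
    rw [h1, map_zero] at h2
    have h3 := hD (M v)
    rw [h1, ← h2] at h3
    have h4 : M v = (pr (M v) : V) := by
      have : t • (M v - (pr (M v) : V)) = 0 := by simpa using h3.symm
      rcases smul_eq_zero.1 this with h | h
      · exact absurd h ht0
      · exact sub_eq_zero.1 h
    have h5 : pr (M v) = q (pr (M v)) := sub_eq_zero.1 h2.symm
    have h6 : N (pr (M v)) = pr (M v) := by
      rw [hN, ← h5, h5, hq0, zero_add]
    have h7 : (pr (M v) : V) = D v := by
      apply N.injective
      rw [h6, ← hM, ← h4]
    have h8 : pr (M v) = pr v - q (pr v) := by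
      rw [← hprD, ← h7, hpr]
    have h9 : pr (M v) = 0 := by
      rw [h5, h8, map_sub, hqq, sub_self]
    rw [h4, h9]; rfl)
  apply rep_of_ker k hk B C X
  intro v
  rw [hX]
  constructor
  · intro hv
    have h1 : C (v - pr v) = M (v - pr v) := by
      rw [map_sub, map_sub, hMK, hv]
    have h2 : M (v - pr v) = t • N (v - pr v) := by
      rw [hM, hD]
      simp [hpr]
    have h3 := hte _ (h1.trans h2)
    rw [sub_eq_zero.1 h3]
    exact (pr v).2
  · intro hv
    exact (hMK ⟨v, hv⟩).symm

/-- The special case for squares. -/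
theorem rep_special_two {F V : Type*} [Field F] [IsAlgClosed F] [CharZero F]
    [AddCommGroup V] [Module F V] [FiniteDimensional F V]
    (B C : Module.End F V) (b : Module.Basis (Fin 4) F V)
    (hC2 : C (b 2) = b 3) (hC3 : C (b 3) = 0) (hB2 : B (b 2) = 0) (hB3 : B (b 3) = 0)
    (hK : ∀ v, B v = 0 → ∃ x y : F, v = x • b 2 + y • b 3) :
    ∃ X Y : Module.End F V, C = X ^ 2 + Y ^ 2 * B := by
  obtain ⟨m, hm0, hm⟩ : ∃ m : F, m ≠ 0 ∧ b.repr (C (b 0)) 0 - m ^ 2 ≠ 0 := by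
    by_cases h : b.repr (C (b 0)) 0 - 1 ^ 2 = 0
    · refine ⟨2, by norm_num, ?_⟩
      rw [sub_eq_zero] at h
      rw [h]
      norm_num
    · exact ⟨1, one_ne_zero, h⟩
  let c1 := b.repr (C (b 0)) 3
  let c2 := b.repr (C (b 1)) 3 - 1
  let X : Module.End F V := b.constr F ![m • b 0 + (c1 / m) • b 3,
    b 3 + c2 • (b 1 - c2 • b 2), b 1 - c2 • b 2, 0]
  have hX0 : X (b 0) = m • b 0 + (c1 / m) • b 3 := by simp [X]
  have hX1 : X (b 1) = b 3 + c2 • (b 1 - c2 • b 2) := by simp [X]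
  have hX2 : X (b 2) = b 1 - c2 • b 2 := by simp [X]
  have hX3 : X (b 3) = 0 := by simp [X]
  have hXX : ∀ v, (X ^ 2) v = X (X v) := fun v => by rw [pow_two]; rfl
  have hM0 : X (X (b 0)) = (m ^ 2) • b 0 + c1 • b 3 := by
    have : c1 = m * (c1 / m) := by field_simp
    rw [hX0, map_add, map_smul, map_smul, hX0, hX3]
    nth_rewrite 3 [this]
    module
  have hM1 : X (X (b 1)) = c2 • b 3 := by
    rw [hX1, map_add, map_smul, map_sub, map_smul, hX3, hX2, hX1]; module
  have hM2 : X (X (b 2)) = b 3 := by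
    rw [hX2, map_sub, map_smul, hX2, hX1]; module
  have hM3 : X (X (b 3)) = 0 := by rw [hX3, map_zero]
  apply rep_of_ker 2 le_rfl B C X
  intro v
  rw [hXX]
  constructor
  · intro hv
    obtain ⟨v0, v1, v2, v3, rfl⟩ : ∃ v0 v1 v2 v3 : F,
        v = v0 • b 0 + v1 • b 1 + v2 • b 2 + v3 • b 3 :=
      ⟨_, _, _, _, by rw [← Fin.sum_univ_four fun i => b.repr v i • b i, b.sum_repr]⟩
    simp only [map_add, map_smul, hM0, hM1, hM2, hM3, hC2, hC3] at hv
    have h3 := congrArg (fun x => b.repr x 3) hv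
    have h0 := congrArg (fun x => b.repr x 0) hv
    simp [Finsupp.single_apply] at h3 h0
    have hv1 : v1 = 0 := by
      simp only [c1, c2] at h3
      linear_combination h3
    have hv0 : v0 = 0 := by
      subst hv1
      have : v0 * (b.repr (C (b 0)) 0 - m ^ 2) = 0 := by linear_combination h0
      exact (mul_eq_zero.1 this).resolve_right hm
    simp [hv0, hv1, hB2, hB3]
  · intro hv
    obtain ⟨x, y, rfl⟩ := hK v hv
    simp only [map_add, map_smul, hM2, hM3, hC2, hC3]

/-- The special case for cubes. -/
theorem rep_special_three {F V : Type*} [Field F] [IsAlgClosed F] [CharZero F]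
    [AddCommGroup V] [Module F V] [FiniteDimensional F V]
    (B C : Module.End F V) (b : Module.Basis (Fin 4) F V)
    (hC2 : C (b 2) = b 3) (hC3 : C (b 3) = 0) (hB2 : B (b 2) = 0) (hB3 : B (b 3) = 0)
    (hK : ∀ v, B v = 0 → ∃ x y : F, v = x • b 2 + y • b 3) :
    ∃ X Y : Module.End F V, C = X ^ 3 + Y ^ 3 * B := by
  have key : ∀ c1 c2 : F, ∃ X : Module.End F V, (X ^ 3) (b 0) = c1 • b 3 ∧
      (X ^ 3) (b 1) = c2 • b 3 ∧ (X ^ 3) (b 2) = b 3 ∧ (X ^ 3) (b 3) = 0 := by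
    intro c1 c2
    let X : Module.End F V := b.constr F ![(b 1 - c2 • b 2) + c1 • (b 0 - c1 • b 2),
      b 3 + c2 • (b 0 - c1 • b 2), b 0 - c1 • b 2, 0]
    have hX0 : X (b 0) = (b 1 - c2 • b 2) + c1 • (b 0 - c1 • b 2) := by
      simp [X]
    have hX1 : X (b 1) = b 3 + c2 • (b 0 - c1 • b 2) := by
      simp [X]
    have hX2 : X (b 2) = b 0 - c1 • b 2 := by simp [X]
    have hX3 : X (b 3) = 0 := by simp [X]
    have hXX : ∀ v, (X ^ 3) v = X (X (X v)) := fun v => by rw [pow_succ, pow_two]; rfl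
    have hY0 : X (b 0 - c1 • b 2) = b 1 - c2 • b 2 := by
      rw [map_sub, map_smul, hX0, hX2]; module
    have hY1 : X (b 1 - c2 • b 2) = b 3 := by
      rw [map_sub, map_smul, hX1, hX2]; module
    refine ⟨X, ?_, ?_, ?_, ?_⟩
    · rw [hXX, hX0]
      simp only [map_add, map_smul, map_zero, hY0, hY1, hX3]; module
    · rw [hXX, hX1]
      simp only [map_add, map_smul, map_zero, hY0, hY1, hX3]; module
    · rw [hXX, hX2, hY0, hY1]
    · rw [hXX, hX3, map_zero, map_zero]
  have fin : ∀ c1 c2 : F, (∀ v0 v1 : F,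
      (∀ i, v0 * b.repr (C (b 0)) i + v1 * b.repr (C (b 1)) i =
        (v0 * c1 + v1 * c2) * b.repr (b 3) i) → v0 = 0 ∧ v1 = 0) →
      ∃ X Y : Module.End F V, C = X ^ 3 + Y ^ 3 * B := by
    intro c1 c2 hc
    obtain ⟨X, hM0, hM1, hM2, hM3⟩ := key c1 c2
    apply rep_of_ker 3 (by norm_num) B C X
    intro v
    constructor
    · intro hv
      obtain ⟨v0, v1, v2, v3, rfl⟩ : ∃ v0 v1 v2 v3 : F,
          v = v0 • b 0 + v1 • b 1 + v2 • b 2 + v3 • b 3 :=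
        ⟨_, _, _, _, by rw [← Fin.sum_univ_four fun i => b.repr v i • b i, b.sum_repr]⟩
      simp only [map_add, map_smul, hM0, hM1, hM2, hM3, hC2, hC3] at hv
      obtain ⟨hv0, hv1⟩ := hc v0 v1 (by
        intro i
        have h3 := congrArg (fun x => b.repr x i) hv
        simp only [map_add, map_smul, Finsupp.add_apply, Finsupp.smul_apply, smul_eq_mul] at h3
        linear_combination h3)
      simp [hv0, hv1, hB2, hB3]
    · intro hv
      obtain ⟨x, y, rfl⟩ := hK v hv
      simp only [map_add, map_smul, hM2, hM3, hC2, hC3]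
  by_cases ha : ∃ i, i ≠ 3 ∧ b.repr (C (b 0)) i ≠ 0
  · obtain ⟨i, hi, ha⟩ := ha
    refine fin (b.repr (C (b 0)) 3) (b.repr (C (b 1)) 3 - 1) ?_
    intro v0 v1 h
    have h3 := h 3
    have h0 := h i
    simp only [Module.Basis.repr_self, Finsupp.single_eq_same, Finsupp.single_eq_of_ne hi] at h3 h0
    have hv1 : v1 = 0 := by linear_combination h3
    subst hv1
    exact ⟨by simpa [ha] using h0, rfl⟩
  by_cases hb : ∃ i, i ≠ 3 ∧ b.repr (C (b 1)) i ≠ 0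
  · obtain ⟨i, hi, hb⟩ := hb
    refine fin (b.repr (C (b 0)) 3 - 1) (b.repr (C (b 1)) 3) ?_
    intro v0 v1 h
    have h3 := h 3
    have h0 := h i
    simp only [Module.Basis.repr_self, Finsupp.single_eq_same, Finsupp.single_eq_of_ne hi] at h3 h0
    have hv0 : v0 = 0 := by linear_combination h3
    subst hv0
    exact ⟨rfl, by simpa [hb] using h0⟩
  push Not at ha hb
  obtain ⟨X, hM0, hM1, hM2, hM3⟩ := key (b.repr (C (b 0)) 3) (b.repr (C (b 1)) 3)
  refine ⟨X, 0, ?_⟩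
  rw [zero_pow (by norm_num), zero_mul, add_zero]
  apply b.ext
  intro i
  fin_cases i
  · change C (b 0) = (X ^ 3) (b 0)
    rw [hM0, ← b.sum_repr (C (b 0)), Fin.sum_univ_four]
    simp [ha]
  · change C (b 1) = (X ^ 3) (b 1)
    rw [hM1, ← b.sum_repr (C (b 1)), Fin.sum_univ_four]
    simp [hb]
  · change C (b 2) = (X ^ 3) (b 2)
    rw [hM2, hC2]
  · change C (b 3) = (X ^ 3) (b 3)
    rw [hM3, hC3]

/-- A basis adapted to a nilpotent chain in the kernel. -/
theorem exists_adapted_basis {F V : Type*} [Field F]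
    [AddCommGroup V] [Module F V] [FiniteDimensional F V] (hV : Module.finrank F V = 4)
    (K : Submodule F V) (hK : Module.finrank F K ≤ 2) (w u : V) (hw : w ∈ K) (hu : u ∈ K)
    (hli : ∀ x y : F, x • w + y • u = 0 → x = 0 ∧ y = 0) :
    Module.finrank F K = 2 ∧ ∃ b : Module.Basis (Fin 4) F V, b 2 = w ∧ b 3 = u ∧
      ∀ v ∈ K, ∃ x y : F, v = x • b 2 + y • b 3 := by
  have hli' : LinearIndependent F ![(⟨w, hw⟩ : K), ⟨u, hu⟩] := by
    rw [LinearIndependent.pair_iff]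
    intro x y h
    exact hli x y (congrArg Subtype.val h)
  have h2 : Module.finrank F K = 2 := by
    have := hli'.fintype_card_le_finrank
    rw [Fintype.card_fin] at this
    omega
  refine ⟨h2, ?_⟩
  let bK := basisOfLinearIndependentOfCardEqFinrank hli' (by rw [h2, Fintype.card_fin])
  have hbK : ∀ i, bK i = ![(⟨w, hw⟩ : K), ⟨u, hu⟩] i := fun i => by simp [bK]
  obtain ⟨U, hU⟩ := K.exists_isCompl
  have hUd : Module.finrank F U = 2 := by
    have := Submodule.finrank_add_eq_of_isCompl hU
    omega
  let bU := Module.finBasisOfFinrankEq F U hUd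
  let b : Module.Basis (Fin 4) F V := ((bU.prod bK).map
    (Submodule.prodEquivOfIsCompl U K hU.symm)).reindex (finSumFinEquiv (m := 2) (n := 2))
  have hb2 : b 2 = w := by
    have : (finSumFinEquiv (m := 2) (n := 2)).symm 2 = Sum.inr 0 := by decide
    simp only [b, Module.Basis.reindex_apply, this]
    simp [hbK]
  have hb3 : b 3 = u := by
    have : (finSumFinEquiv (m := 2) (n := 2)).symm 3 = Sum.inr 1 := by decide
    simp only [b, Module.Basis.reindex_apply, this]
    simp [hbK]
  refine ⟨b, hb2, hb3, fun v hv => ⟨bK.repr ⟨v, hv⟩ 0, bK.repr ⟨v, hv⟩ 1, ?_⟩⟩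
  have := congrArg Subtype.val (bK.sum_repr ⟨v, hv⟩)
  rw [Fin.sum_univ_two, hbK, hbK] at this
  rw [hb2, hb3]
  exact this.symm

theorem rep_sufficient {F V : Type*} [Field F] [IsAlgClosed F] [CharZero F]
    [AddCommGroup V] [Module F V] [FiniteDimensional F V] (hV : Module.finrank F V = 4)
    (k : ℕ) (hk : 2 ≤ k) (B C : Module.End F V)
    (h : k * (Module.finrank F (LinearMap.ker B) - 1) < 4) :
    ∃ X Y : Module.End F V, C = X ^ k + Y ^ k * B := by
  by_cases hg : ∀ w, B w = 0 → B (C w) = 0 → C (C w) = 0 → C w = 0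
  · exact rep_generic k hk B C hg
  push Not at hg
  obtain ⟨w, hw, hu, hCu, hne⟩ := hg
  have hr : Module.finrank F (LinearMap.ker B) ≤ 2 := by
    by_contra hcon
    have : 2 ≤ Module.finrank F (LinearMap.ker B) - 1 := by omega
    have := Nat.mul_le_mul hk this
    omega
  obtain ⟨h2, b, hb2, hb3, hbK⟩ := exists_adapted_basis hV (LinearMap.ker B) hr w (C w) hw hu (by
    intro x y hxy
    have h1 := congrArg C hxy
    simp only [map_add, map_smul, hCu, smul_zero, add_zero, map_zero] at h1
    have hx : x = 0 := (smul_eq_zero.1 h1).resolve_right hne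
    subst hx
    rw [zero_smul, zero_add] at hxy
    exact ⟨rfl, (smul_eq_zero.1 hxy).resolve_right hne⟩)
  rw [h2] at h
  have hk' : k = 2 ∨ k = 3 := by omega
  rcases hk' with rfl | rfl
  · exact rep_special_two B C b (by rw [hb2, hb3]) (by rw [hb3, hCu]) (by rw [hb2, hw])
      (by rw [hb3, hu]) hbK
  · exact rep_special_three B C b (by rw [hb2, hb3]) (by rw [hb3, hCu]) (by rw [hb2, hw])
      (by rw [hb3, hu]) hbK

theorem rep_necessary {F V : Type*} [Field F]
    [AddCommGroup V] [Module F V] [FiniteDimensional F V] (hV : Module.finrank F V = 4)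
    (k : ℕ) (B : Module.End F V)
    (h : ∀ C : Module.End F V, ∃ X Y : Module.End F V, C = X ^ k + Y ^ k * B) :
    k * (Module.finrank F (LinearMap.ker B) - 1) < 4 := by
  by_contra hcon
  obtain ⟨r, hr⟩ : ∃ r, Module.finrank F (LinearMap.ker B) = r + 1 := by
    refine ⟨Module.finrank F (LinearMap.ker B) - 1, ?_⟩
    rcases Nat.eq_zero_or_pos (Module.finrank F (LinearMap.ker B)) with h0 | h0
    · rw [h0] at hcon; simp at hcon
    · omega
  rw [hr, Nat.add_sub_cancel, not_lt] at hcon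
  let bK := Module.finBasisOfFinrankEq F (LinearMap.ker B) hr
  obtain ⟨C, hC⟩ := LinearMap.exists_extend (bK.constr F
    (fun i => if h : i.1 + 1 < r + 1 then (bK ⟨i.1 + 1, h⟩ : V) else 0))
  have hC' : ∀ i, C (bK i) = if h : i.1 + 1 < r + 1 then (bK ⟨i.1 + 1, h⟩ : V) else 0 := by
    intro i
    have := LinearMap.congr_fun hC (bK i)
    rw [Module.Basis.constr_basis] at this
    exact this
  obtain ⟨X, Y, hXY⟩ := h C
  have hX : ∀ i, (X ^ k) (bK i) = C (bK i) := by
    intro i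
    rw [hXY, LinearMap.add_apply, Module.End.mul_apply, (bK i).2, map_zero, add_zero]
  have hpow : ∀ j (hj : j < r + 1), (X ^ (k * j)) (bK 0) = bK ⟨j, hj⟩ := by
    intro j
    induction j with
    | zero => intro hj; simp
    | succ j ih =>
      intro hj
      rw [Nat.mul_succ, add_comm, pow_add, Module.End.mul_apply, ih (by omega), hX, hC', dif_pos hj]
  have h1 : (X ^ (k * (r + 1))) (bK 0) = 0 := by
    rw [Nat.mul_succ, add_comm, pow_add, Module.End.mul_apply, hpow r (by omega), hX, hC',
      dif_neg (by simp)]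
  have h2 : (X ^ 4) (bK 0) = 0 := by
    have := Module.End.ker_pow_le_ker_pow_finrank X (k * (r + 1)) h1
    rwa [hV] at this
  have h3 := hpow r (by omega)
  rw [← Nat.sub_add_cancel hcon, pow_add, Module.End.mul_apply, h2, map_zero] at h3
  exact bK.ne_zero _ (Subtype.ext h3.symm)

theorem surj_iff {F : Type*} [Field F] [IsAlgClosed F] [CharZero F]
    (k : ℕ) (hk : 2 ≤ k)
    (A₁ A₂ : Matrix (Fin 4) (Fin 4) F) (hA₁ : IsUnit A₁)
    (r₀ : ℕ) (hr₀ : r₀ = Module.finrank F (LinearMap.ker A₂.mulVecLin)) :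
    (∀ C : Matrix (Fin 4) (Fin 4) F,
      ∃ X₁ X₂ : Matrix (Fin 4) (Fin 4) F, C = A₁ * X₁ ^ k + A₂ * X₂ ^ k) ↔
      k * (r₀ - 1) < 4 := by
  obtain ⟨u, rfl⟩ := hA₁
  let U : Matrix (Fin 4) (Fin 4) F := ↑u
  let U' : Matrix (Fin 4) (Fin 4) F := ↑u⁻¹
  have hUU' : U * U' = 1 := u.mul_inv
  have hU'U : U' * U = 1 := u.inv_mul
  let φ : Matrix (Fin 4) (Fin 4) F ≃ₐ[F] Module.End F (Fin 4 → F) := Matrix.toLinAlgEquiv'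
  let B := φ (U' * A₂).transpose
  have hV : Module.finrank F (Fin 4 → F) = 4 := by simp
  have hB : Module.finrank F (LinearMap.ker B) = r₀ := by
    have h1 := LinearMap.finrank_range_add_finrank_ker B
    have h2 := LinearMap.finrank_range_add_finrank_ker A₂.mulVecLin
    have h3 : Module.finrank F (LinearMap.range B) = Module.finrank F (LinearMap.range A₂.mulVecLin) := by
      change (U' * A₂).transpose.rank = A₂.rank
      rw [Matrix.rank_transpose]
      apply Matrix.rank_mul_eq_right_of_isUnit_det
      exact (Matrix.isUnit_iff_isUnit_det _).1 (u⁻¹).isUnit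
    omega
  rw [← hB]
  constructor
  · intro h
    apply rep_necessary hV k B
    intro C
    obtain ⟨X, Y, hXY⟩ := h (U * (φ.symm C).transpose)
    refine ⟨φ X.transpose, φ Y.transpose, ?_⟩
    apply φ.symm.injective
    have h1 : (φ.symm C).transpose = X ^ k + U' * A₂ * Y ^ k := by
      have := congrArg (U' * ·) hXY
      simp only [mul_add, ← mul_assoc] at this
      change U' * U * _ = U' * U * _ + _ at this
      rwa [hU'U, one_mul, one_mul] at this
    have h2 := congrArg Matrix.transpose h1
    simp only [B, ← map_pow, ← map_mul, ← map_add, AlgEquiv.symm_apply_apply]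
    rw [Matrix.transpose_transpose] at h2
    rw [h2, Matrix.transpose_add, Matrix.transpose_mul, Matrix.transpose_pow, Matrix.transpose_pow]
  · intro h C
    obtain ⟨X, Y, hXY⟩ := rep_sufficient hV k hk B (φ (U' * C).transpose) h
    refine ⟨(φ.symm X).transpose, (φ.symm Y).transpose, ?_⟩
    have h1 := congrArg (fun Z => U * (φ.symm Z).transpose) hXY
    simp only [B, map_add, map_mul, map_pow, AlgEquiv.symm_apply_apply, Matrix.transpose_add,
      Matrix.transpose_mul, Matrix.transpose_pow, Matrix.transpose_transpose, mul_add,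
      ← mul_assoc, hUU', one_mul] at h1
    exact h1

/-- For `A₁ ∈ GL₄(F)`, `A₂ ∈ M₄(F)` with `r₀ = nullity(A₂)`, the map
`(X₁,X₂) ↦ A₁ X₁^k + A₂ X₂^k` is surjective on `M₄(F)` iff `k (r₀ - 1) < 4`.
In particular, for `k = 2, 3` surjectivity holds iff `r₀ ≤ 2`, and for `k ≥ 4`
iff `r₀ ≤ 1`. -/
theorem stmt_18 {F : Type*} [Field F] [IsAlgClosed F] [CharZero F]
    (k : ℕ) (hk : 2 ≤ k)
    (A₁ A₂ : Matrix (Fin 4) (Fin 4) F) (hA₁ : IsUnit A₁)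
    (r₀ : ℕ) (hr₀ : r₀ = Module.finrank F (LinearMap.ker A₂.mulVecLin)) :
    ((∀ C : Matrix (Fin 4) (Fin 4) F,
      ∃ X₁ X₂ : Matrix (Fin 4) (Fin 4) F, C = A₁ * X₁ ^ k + A₂ * X₂ ^ k) ↔
      k * (r₀ - 1) < 4) ∧
    ((k = 2 ∨ k = 3) →
      ((∀ C : Matrix (Fin 4) (Fin 4) F,
        ∃ X₁ X₂ : Matrix (Fin 4) (Fin 4) F, C = A₁ * X₁ ^ k + A₂ * X₂ ^ k) ↔
        r₀ ≤ 2)) ∧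
    (4 ≤ k →
      ((∀ C : Matrix (Fin 4) (Fin 4) F,
        ∃ X₁ X₂ : Matrix (Fin 4) (Fin 4) F, C = A₁ * X₁ ^ k + A₂ * X₂ ^ k) ↔
        r₀ ≤ 1)) := by
  have h := surj_iff k hk A₁ A₂ hA₁ r₀ hr₀
  refine ⟨h, fun hk' => h.trans ?_, fun hk' => h.trans ?_⟩
  · rcases hk' with rfl | rfl <;> omega
  · constructor
    · intro h1
      by_contra hcon
      have := Nat.mul_le_mul hk' (show 1 ≤ r₀ - 1 by omega)
      omega
    · intro h1
      have : r₀ - 1 = 0 := by omega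
      rw [this]; omega
end
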